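/- Let p > 1 and a, b, L > 0. There exists u ∈ C¹[0,L] with u(0) = u(L) = 0 and ∫₀^L |u(t)|^p dt = 1 such that ∫₀^L a^p [(u'(t))⁺]^p + b^p [(u'(t))⁻]^p dt = λ^{a,b}_{1,p}(0,L), and this minimizer u is a weak solution of −Δ^{a,b}_p u = λ^{a,b}_{1,p}(0,L) |u|^{p−2} u on (0,L). -/

import Mathlib

open Set

/-- `u` is C¹ on `[α, γ]` with derivative `u'` there. -/
def C1On (α γ : ℝ) (u u' : ℝ → ℝ) : Prop :=
  (∀ t ∈ Set.Icc α γ, HasDerivWithinAt u (u' t) (Set.Icc α γ) t) ∧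
  ContinuousOn u' (Set.Icc α γ)

/-- Admissible functions on `[0, L]`: C¹ with zero boundary values. -/
def Adm (L : ℝ) (u u' : ℝ → ℝ) : Prop :=
  C1On 0 L u u' ∧ u 0 = 0 ∧ u L = 0

/-- The asymmetric energy integrand `a^p (s⁺)^p + b^p (s⁻)^p`. -/
noncomputable def asymE (p a b s : ℝ) : ℝ :=
  a ^ p * (max s 0) ^ p + b ^ p * (max (-s) 0) ^ p

/-- The asymmetric flux `a^p (s⁺)^(p-1) - b^p (s⁻)^(p-1)`. -/
noncomputable def asymFlux (p a b s : ℝ) : ℝ :=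
  a ^ p * (max s 0) ^ (p - 1) - b ^ p * (max (-s) 0) ^ (p - 1)

/-- The first Dirichlet eigenvalue `λ^{a,b}_{1,p}(0,L)`, as the infimum of the
asymmetric energy over normalized admissible functions. -/
noncomputable def lam1 (p a b L : ℝ) : ℝ :=
  sInf { E : ℝ | ∃ u u' : ℝ → ℝ, Adm L u u' ∧
    (∫ t in (0:ℝ)..L, |u t| ^ p) = 1 ∧
    E = ∫ t in (0:ℝ)..L, asymE p a b (u' t) }

/-- `u` (a C¹ function on `[0,L]` with derivative `u'` and zero boundary values)
is a weak solution of `-Δ^{a,b}_p u = g` on `(0,L)`. -/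
def IsWeakSol (p a b L : ℝ) (u u' g : ℝ → ℝ) : Prop :=
  Adm L u u' ∧
  ∀ φ φ' : ℝ → ℝ, Adm L φ φ' →
    (∫ t in (0:ℝ)..L, asymFlux p a b (u' t) * φ' t) =
      ∫ t in (0:ℝ)..L, g t * φ t

lemma max_rpow_hasDerivAt {p : ℝ} (hp : 1 < p) (s : ℝ) :
    HasDerivAt (fun s : ℝ => (max s 0) ^ p) (p * (max s 0) ^ (p - 1)) s := by
  have h : ∀ y : ℝ, y ≠ 0 →
      HasDerivAt (fun s : ℝ => (max s 0) ^ p) (p * (max y 0) ^ (p - 1)) y := by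
    intro y hy
    rcases lt_or_gt_of_ne hy with h | h
    · rw [max_eq_right h.le, Real.zero_rpow (by linarith), mul_zero]
      refine (hasDerivAt_const y (0:ℝ)).congr_of_eventuallyEq ?_
      filter_upwards [Iio_mem_nhds h] with z hz
      rw [max_eq_right (le_of_lt hz), Real.zero_rpow (by linarith)]
    · rw [max_eq_left h.le]
      refine (Real.hasDerivAt_rpow_const (Or.inl h.ne')).congr_of_eventuallyEq ?_
      filter_upwards [Ioi_mem_nhds h] with z hz
      rw [max_eq_left (le_of_lt hz)]
  have c1 : Continuous (fun s : ℝ => (max s 0) ^ p) :=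
    (continuous_id.max continuous_const).rpow_const (fun _ => Or.inr (by linarith))
  have c2 : Continuous (fun s : ℝ => p * (max s 0) ^ (p - 1)) :=
    continuous_const.mul
      ((continuous_id.max continuous_const).rpow_const (fun _ => Or.inr (by linarith)))
  by_cases hs : s = 0
  · subst hs
    exact hasDerivAt_of_hasDerivAt_of_ne h c1.continuousAt c2.continuousAt
  · exact h s hs

lemma asymFlux_continuous {p : ℝ} (hp : 1 < p) (a b : ℝ) : Continuous (asymFlux p a b) := by
  unfold asymFlux
  exact (continuous_const.mul ((continuous_id.max continuous_const).rpow_const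
      (fun _ => Or.inr (by linarith)))).sub
    (continuous_const.mul ((continuous_neg.max continuous_const).rpow_const
      (fun _ => Or.inr (by linarith))))

lemma asymE_continuous {p : ℝ} (hp : 1 < p) (a b : ℝ) : Continuous (asymE p a b) := by
  unfold asymE
  exact (continuous_const.mul ((continuous_id.max continuous_const).rpow_const
      (fun _ => Or.inr (by linarith)))).add
    (continuous_const.mul ((continuous_neg.max continuous_const).rpow_const
      (fun _ => Or.inr (by linarith))))

lemma asymE_of_nonneg {p : ℝ} (hp : 1 < p) (a b : ℝ) {s : ℝ} (hs : 0 ≤ s) :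
    asymE p a b s = a ^ p * s ^ p := by
  unfold asymE
  rw [max_eq_left hs, max_eq_right (by linarith), Real.zero_rpow (by linarith)]; ring

lemma asymFlux_of_nonneg {p : ℝ} (hp : 1 < p) (a b : ℝ) {s : ℝ} (hs : 0 ≤ s) :
    asymFlux p a b s = a ^ p * s ^ (p - 1) := by
  unfold asymFlux
  rw [max_eq_left hs, max_eq_right (by linarith), Real.zero_rpow (by linarith)]; ring

lemma asymE_neg (p a b s : ℝ) : asymE p a b (-s) = asymE p b a s := by
  unfold asymE; rw [neg_neg]; ring

lemma asymFlux_neg (p a b s : ℝ) : asymFlux p a b (-s) = - asymFlux p b a s := by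
  unfold asymFlux; rw [neg_neg]; ring

lemma rpow_sub_one_mul {p : ℝ} (hp : 1 < p) {s : ℝ} (hs : 0 ≤ s) : s ^ (p - 1) * s = s ^ p := by
  rcases hs.eq_or_lt with h | h
  · rw [← h, Real.zero_rpow (by linarith), Real.zero_rpow (by linarith)]; simp
  · rw [Real.rpow_sub_one h.ne']; field_simp

lemma asymFlux_mul_self {p : ℝ} (hp : 1 < p) (a b s : ℝ) :
    asymFlux p a b s * s = asymE p a b s := by
  have key : ∀ (a b : ℝ) {s : ℝ}, 0 ≤ s → asymFlux p a b s * s = asymE p a b s := by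
    intro a b s hs
    rw [asymFlux_of_nonneg hp _ _ hs, asymE_of_nonneg hp _ _ hs, mul_assoc, rpow_sub_one_mul hp hs]
  rcases le_total 0 s with h | h
  · exact key a b h
  · have := key b a (s := -s) (by linarith)
    rw [asymFlux_neg, asymE_neg] at this
    linarith

lemma asymFlux_smul {p : ℝ} (hp : 1 < p) (a b : ℝ) {r : ℝ} (hr : 0 ≤ r) (s : ℝ) :
    asymFlux p a b (r * s) = r ^ (p - 1) * asymFlux p a b s := by
  have key : ∀ (a b : ℝ) {s : ℝ}, 0 ≤ s →
      asymFlux p a b (r * s) = r ^ (p - 1) * asymFlux p a b s := by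
    intro a b s hs
    rw [asymFlux_of_nonneg hp _ _ hs, asymFlux_of_nonneg hp _ _ (mul_nonneg hr hs),
      Real.mul_rpow hr hs]; ring
  rcases le_total 0 s with h | h
  · exact key a b h
  · have := key b a (s := -s) (by linarith)
    rw [mul_neg, asymFlux_neg, asymFlux_neg] at this
    linarith

lemma asymE_nonneg {p a b : ℝ} (ha : 0 < a) (hb : 0 < b) (s : ℝ) : 0 ≤ asymE p a b s := by
  unfold asymE
  have := le_max_right s 0
  have := le_max_right (-s) 0
  positivity

lemma young_aux {p : ℝ} (hp : 1 < p) {x y : ℝ} (hx : 0 ≤ x) (hy : 0 ≤ y) :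
    p * y ^ (p - 1) * x - (p - 1) * y ^ p ≤ x ^ p := by
  have hc : p.HolderConjugate (p / (p - 1)) := Real.HolderConjugate.conjExponent hp
  have h := Real.young_inequality_of_nonneg hx (Real.rpow_nonneg hy (p - 1)) hc
  have hp1 : p - 1 ≠ 0 := by linarith
  rw [← Real.rpow_mul hy, show (p - 1) * (p / (p - 1)) = p by field_simp] at h
  have hp0 : 0 < p := by linarith
  have h2 := mul_le_mul_of_nonneg_left h hp0.le
  have e : p * (x ^ p / p + y ^ p / (p / (p - 1))) = x ^ p + (p - 1) * y ^ p := by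
    field_simp
  rw [e] at h2
  linarith

/-- tangent-line inequality for the convex energy -/
lemma asymE_tangent {p a b : ℝ} (hp : 1 < p) (ha : 0 < a) (hb : 0 < b) (x y : ℝ) :
    p * asymFlux p a b y * x - (p - 1) * asymE p a b y ≤ asymE p a b x := by
  have key : ∀ (a b : ℝ), 0 < a → 0 < b → ∀ x y : ℝ, 0 ≤ y →
      p * asymFlux p a b y * x - (p - 1) * asymE p a b y ≤ asymE p a b x := by
    intro a b ha hb x y hy
    have hap : 0 < a ^ p := Real.rpow_pos_of_pos ha p
    rcases le_total 0 x with h | h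
    · rw [asymFlux_of_nonneg hp _ _ hy, asymE_of_nonneg hp _ _ hy, asymE_of_nonneg hp _ _ h]
      have := mul_le_mul_of_nonneg_left (young_aux hp h hy) hap.le
      linarith
    · have h1 := asymE_nonneg (p := p) ha hb x
      have h2 := asymE_nonneg (p := p) ha hb y
      have h3 : 0 ≤ asymFlux p a b y := by
        rw [asymFlux_of_nonneg hp _ _ hy]; positivity
      have h4 : p * asymFlux p a b y * x ≤ 0 :=
        mul_nonpos_of_nonneg_of_nonpos (mul_nonneg (by linarith) h3) h
      have h5 : 0 ≤ (p - 1) * asymE p a b y := mul_nonneg (by linarith) h2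
      linarith
  rcases le_total 0 y with h | h
  · exact key a b ha hb x y h
  · have := key b a hb ha (-x) (-y) (by linarith)
    rw [asymFlux_neg, asymE_neg, asymE_neg] at this
    linarith

/-- Extension of the derivative to the closed interval, with one exceptional point. -/
lemma ext_deriv {L t1 : ℝ} {u g : ℝ → ℝ} (hu : Continuous u) (hg : Continuous g)
    (h : ∀ t ∈ Ioo 0 L, t ≠ t1 → HasDerivAt u (g t) t) :
    ∀ t ∈ Icc 0 L, HasDerivWithinAt u (g t) (Icc 0 L) t := by
  have key : ∀ t ∈ Icc 0 L, u t = u 0 + ∫ s in (0:ℝ)..t, g s := by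
    intro t ht
    have := MeasureTheory.integral_eq_of_hasDerivAt_off_countable_of_le u g ht.1
      (s := {t1}) (countable_singleton t1) hu.continuousOn
      (fun x hx => h x ⟨hx.1.1, hx.1.2.trans_le ht.2⟩ hx.2) (hg.intervalIntegrable _ _)
    rw [this]; ring
  intro t ht
  have hd : HasDerivAt (fun t => u 0 + ∫ s in (0:ℝ)..t, g s) (g t) t :=
    (intervalIntegral.integral_hasDerivAt_right (hg.intervalIntegrable _ _)
      (hg.stronglyMeasurableAtFilter _ _) hg.continuousAt).const_add (u 0)
  exact hd.hasDerivWithinAt.congr key (key t ht)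

/-- The generalized sine function. -/
lemma exists_S {p : ℝ} (hp : 1 < p) : ∃ T : ℝ, 0 < T ∧ ∃ S : ℝ → ℝ, Continuous S ∧ S 0 = 0 ∧
    S T = 1 ∧ ∀ x ∈ Ioo 0 T, 0 < S x ∧ S x < 1 ∧
      HasDerivAt S ((1 - S x ^ p) ^ (1 / p)) x := by
  have hp0 : 0 < p := by linarith
  set f : ℝ → ℝ := (Ioo (0:ℝ) 1).piecewise (fun s => (1 - s ^ p) ^ (-(1 / p))) (fun _ => 1)
    with hf
  have f_in : ∀ s ∈ Ioo (0:ℝ) 1, f s = (1 - s ^ p) ^ (-(1 / p)) := fun s hs =>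
    piecewise_eq_of_mem _ _ _ hs
  have f_out : ∀ s, s ∉ Ioo (0:ℝ) 1 → f s = 1 := fun s hs =>
    piecewise_eq_of_notMem _ _ _ hs
  have base : ∀ s ∈ Ioo (0:ℝ) 1, 1 - s ≤ 1 - s ^ p ∧ 1 - s ^ p ≤ 1 := by
    intro s hs
    have h1 : s ^ p ≤ s ^ (1:ℝ) := Real.rpow_le_rpow_of_exponent_ge hs.1 hs.2.le hp.le
    rw [Real.rpow_one] at h1
    have h2 : 0 ≤ s ^ p := Real.rpow_nonneg hs.1.le _
    constructor <;> linarith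
  have f_ge : ∀ s, 1 ≤ f s := by
    intro s
    by_cases hs : s ∈ Ioo (0:ℝ) 1
    · rw [f_in s hs]
      obtain ⟨h1, h2⟩ := base s hs
      exact Real.one_le_rpow_of_pos_of_le_one_of_nonpos (by linarith [hs.2]) h2
        (by simp; positivity)
    · rw [f_out s hs]
  have f_meas : Measurable f := by
    refine Measurable.piecewise measurableSet_Ioo ?_ measurable_const
    fun_prop
  -- a locally integrable majorant
  have f_le : ∀ s, ‖f s‖ ≤ 1 + ‖(1 - s) ^ (-(1 / p))‖ := by
    intro s
    rw [Real.norm_of_nonneg (by linarith [f_ge s])]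
    by_cases hs : s ∈ Ioo (0:ℝ) 1
    · rw [f_in s hs]
      obtain ⟨h1, h2⟩ := base s hs
      have h3 := Real.rpow_le_rpow_of_nonpos (z := -(1 / p)) (by linarith [hs.2] : 0 < 1 - s) h1
        (by simp; positivity)
      have := Real.le_norm_self ((1 - s) ^ (-(1 / p)))
      linarith
    · rw [f_out s hs]
      linarith [norm_nonneg ((1 - s) ^ (-(1 / p)))]
  have f_int : ∀ x y : ℝ, IntervalIntegrable f MeasureTheory.volume x y := by
    intro x y
    have h1 : IntervalIntegrable (fun s : ℝ => s ^ (-(1 / p))) MeasureTheory.volume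
        (1 - x) (1 - y) :=
      intervalIntegral.intervalIntegrable_rpow' (by
        have : 1 / p < 1 := by rw [div_lt_one hp0]; exact hp
        linarith)
    have h2 := h1.comp_sub_left 1
    simp only [sub_sub_cancel] at h2
    have h3 : IntervalIntegrable (fun s : ℝ => 1 + ‖(1 - s) ^ (-(1 / p))‖)
        MeasureTheory.volume x y := intervalIntegrable_const.add h2.norm
    refine h3.mono_fun f_meas.aestronglyMeasurable (Filter.Eventually.of_forall fun s => ?_)
    exact (f_le s).trans (Real.le_norm_self _)
  set F : ℝ → ℝ := fun y => ∫ s in (0:ℝ)..y, f s with hF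
  have F_cont : Continuous F := intervalIntegral.continuous_primitive f_int 0
  have F_sub : ∀ x y, x ≤ y → y - x ≤ F y - F x := by
    intro x y hxy
    have e : F y - F x = ∫ s in x..y, f s :=
      intervalIntegral.integral_interval_sub_left (f_int 0 y) (f_int 0 x)
    rw [e]
    have := intervalIntegral.integral_mono_on hxy (intervalIntegrable_const (c := (1:ℝ)))
      (f_int x y) (fun s _ => f_ge s)
    simpa using this
  have F_mono : StrictMono F := by
    intro x y hxy
    have := F_sub x y hxy.le
    linarith
  have F0 : F 0 = 0 := by simp [hF]
  have F_surj : Function.Surjective F := by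
    refine F_cont.surjective ?_ ?_
    · refine Filter.tendsto_atTop_mono' _ ?_ Filter.tendsto_id
      filter_upwards [Filter.eventually_ge_atTop 0] with y hy
      have := F_sub 0 y hy
      simp only [id]; linarith
    · refine Filter.tendsto_atBot_mono' _ ?_ Filter.tendsto_id
      filter_upwards [Filter.eventually_le_atBot 0] with y hy
      have := F_sub y 0 hy
      simp only [id]; linarith
  let e : ℝ ≃o ℝ := StrictMono.orderIsoOfSurjective F F_mono F_surj
  have eF : ∀ y, e y = F y := fun y => rfl
  have hl : ∀ y, e.symm (F y) = y := fun y => by rw [← eF]; simp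
  have hr : ∀ x, F (e.symm x) = x := fun x => by rw [← eF]; simp
  refine ⟨F 1, by have := F_mono (zero_lt_one); linarith, e.symm, e.symm.continuous, ?_, hl 1, ?_⟩
  · have := hl 0
    rwa [F0] at this
  · intro x hx
    have h0 : 0 < e.symm x := by rw [← F_mono.lt_iff_lt, hr, F0]; exact hx.1
    have h1 : e.symm x < 1 := by rw [← F_mono.lt_iff_lt, hr]; exact hx.2
    refine ⟨h0, h1, ?_⟩
    set y := e.symm x with hy
    have hyI : y ∈ Ioo (0:ℝ) 1 := ⟨h0, h1⟩
    obtain ⟨b1, b2⟩ := base y hyI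
    have hpos : 0 < 1 - y ^ p := by linarith
    have fc : ContinuousAt f y := by
      have : ContinuousAt (fun s : ℝ => (1 - s ^ p) ^ (-(1 / p))) y := by
        refine ContinuousAt.rpow_const ?_ (Or.inl hpos.ne')
        exact continuousAt_const.sub (continuousAt_id.rpow_const (Or.inl h0.ne'))
      refine this.congr ?_
      filter_upwards [Ioo_mem_nhds h0 h1] with s hs
      exact (f_in s hs).symm
    have hd : HasDerivAt F (f y) y :=
      intervalIntegral.integral_hasDerivAt_right (f_int 0 y)
        (f_meas.stronglyMeasurable.stronglyMeasurableAtFilter) fc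
    have hfy : f y ≠ 0 := by linarith [f_ge y] |> fun h : (0:ℝ) < f y => h.ne'
    have := HasDerivAt.of_local_left_inverse (f := F) (g := e.symm) (a := x)
      e.symm.continuous.continuousAt hd hfy (Filter.Eventually.of_forall hr)
    rw [f_in y hyI, Real.rpow_neg hpos.le, inv_inv] at this
    exact this

/-- `u` is a positive eigenfunction with eigenvalue `lam`. -/
def Eig (p a b L lam : ℝ) (u u' : ℝ → ℝ) : Prop :=
  Continuous u ∧ Continuous u' ∧ u 0 = 0 ∧ u L = 0 ∧
  (∀ t ∈ Icc 0 L, HasDerivWithinAt u (u' t) (Icc 0 L) t) ∧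
  (∀ t ∈ Ioo 0 L, 0 < u t) ∧
  (∀ t ∈ Icc 0 L, HasDerivWithinAt (fun t => asymFlux p a b (u' t))
    (-(lam * u t ^ (p - 1))) (Icc 0 L) t)

lemma Eig.nonneg {p a b L lam : ℝ} {u u' : ℝ → ℝ} (h : Eig p a b L lam u u') :
    ∀ t ∈ Icc 0 L, 0 ≤ u t := by
  intro t ht
  obtain ⟨-, -, h0, hL, -, hpos, -⟩ := h
  rcases ht.1.eq_or_lt with e | e
  · rw [← e, h0]
  rcases ht.2.eq_or_lt with e' | e'
  · rw [e', hL]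
  exact (hpos t ⟨e, e'⟩).le

lemma flux_scale {p : ℝ} (hp : 1 < p) {a k : ℝ} (b : ℝ) (ha : 0 < a) (hk : 0 < k) {c : ℝ}
    (hc : 0 ≤ c) : asymFlux p a b (c / (a * k)) = a / k ^ (p - 1) * c ^ (p - 1) := by
  rw [asymFlux_of_nonneg hp _ _ (by positivity), Real.div_rpow hc (by positivity),
    Real.mul_rpow ha.le hk.le, ← rpow_sub_one_mul hp ha.le]
  have h1 : 0 < a ^ (p - 1) := Real.rpow_pos_of_pos ha _
  have h2 : 0 < k ^ (p - 1) := Real.rpow_pos_of_pos hk _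
  field_simp

lemma exists_eig {p a b L : ℝ} (hp : 1 < p) (ha : 0 < a) (hb : 0 < b) (hL : 0 < L) :
    ∃ lam u u', Eig p a b L lam u u' := by
  obtain ⟨T, hT, S, hS, hS0, hST, hS'⟩ := exists_S hp
  have hp0 : 0 < p := by linarith
  set C : ℝ → ℝ := fun x => (1 - S x ^ p) ^ (1 / p) with hC
  have hCc : Continuous C :=
    (continuous_const.sub (hS.rpow_const fun _ => Or.inr hp0.le)).rpow_const
      fun _ => Or.inr (by positivity)
  have hCT : C T = 0 := by simp [hC, hST, hp0.ne']
  have hpos : ∀ x ∈ Ioo 0 T, 0 < 1 - S x ^ p := by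
    intro x hx
    obtain ⟨h0, h1, -⟩ := hS' x hx
    have := Real.rpow_lt_one h0.le h1 hp0
    linarith
  have hCpos : ∀ x ∈ Ioo 0 T, 0 ≤ C x := fun x hx => Real.rpow_nonneg (hpos x hx).le _
  have hD : ∀ x ∈ Ioo 0 T, HasDerivAt (fun x => C x ^ (p - 1)) (-((p - 1) * S x ^ (p - 1))) x := by
    intro x hx
    obtain ⟨h0, h1, h2⟩ := hS' x hx
    have hq := hpos x hx
    have d1 : HasDerivAt (fun x => 1 - S x ^ p) (-(C x * p * S x ^ (p - 1))) x := by
      exact (h2.rpow_const (p := p) (Or.inl h0.ne')).const_sub 1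
    have d2 := d1.rpow_const (p := (p - 1) / p) (Or.inl hq.ne')
    have e1 : (1 - S x ^ p) ^ ((p - 1) / p - 1) * C x = 1 := by
      simp only [hC]
      rw [← Real.rpow_add hq]
      have : (p - 1) / p - 1 + 1 / p = 0 := by field_simp; ring
      rw [this, Real.rpow_zero]
    have d3 : HasDerivAt (fun x => (1 - S x ^ p) ^ ((p - 1) / p)) (-((p - 1) * S x ^ (p - 1))) x := by
      convert d2 using 1
      calc -((p - 1) * S x ^ (p - 1))
          = -((p - 1) * S x ^ (p - 1)) * ((1 - S x ^ p) ^ ((p - 1) / p - 1) * C x) := by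
            rw [e1, mul_one]
        _ = _ := by field_simp
    refine d3.congr_of_eventuallyEq ?_
    filter_upwards [Ioo_mem_nhds hx.1 hx.2] with y hy
    simp only [hC]
    rw [← Real.rpow_mul (hpos y hy).le]
    congr 1; ring
  -- scaling
  set k : ℝ := L / ((a + b) * T) with hk
  have hk0 : 0 < k := by positivity
  have hkL : a * k * T + b * k * T = L := by rw [hk]; field_simp
  set t1 : ℝ := a * k * T with ht1
  have hak : 0 < a * k := by positivity
  have hbk : 0 < b * k := by positivity
  have ht1pos : 0 < t1 := by positivity
  have ht1L : t1 < L := by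
    have : 0 < b * k * T := by positivity
    linarith
  have e1 : t1 / (a * k) = T := by rw [ht1]; field_simp
  have e2 : (L - t1) / (b * k) = T := by
    rw [show L - t1 = b * k * T by linarith]; field_simp
  set u : ℝ → ℝ := fun t => if t ≤ t1 then S (t / (a * k)) else S ((L - t) / (b * k)) with hu
  set u' : ℝ → ℝ := fun t => if t ≤ t1 then C (t / (a * k)) / (a * k)
    else - (C ((L - t) / (b * k)) / (b * k)) with hu'
  set lam : ℝ := (p - 1) / (k ^ (p - 1) * k) with hlam
  have huc : Continuous u := by
    refine Continuous.if_le (by fun_prop) (by fun_prop) continuous_id continuous_const ?_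
    intro x hx
    have hx : x = t1 := hx
    rw [hx, e1, e2]
  have hu'c : Continuous u' := by
    refine Continuous.if_le (by fun_prop) (by fun_prop) continuous_id continuous_const ?_
    intro x hx
    have hx : x = t1 := hx
    rw [hx, e1, e2, hCT]; simp
  have m1 : ∀ t ∈ Ioo 0 L, t < t1 → t / (a * k) ∈ Ioo 0 T := by
    intro t ht h
    refine ⟨div_pos ht.1 hak, ?_⟩
    rw [← e1]; exact div_lt_div_of_pos_right h hak
  have m2 : ∀ t ∈ Ioo 0 L, t1 < t → (L - t) / (b * k) ∈ Ioo 0 T := by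
    intro t ht h
    refine ⟨div_pos (by linarith [ht.2]) hbk, ?_⟩
    rw [← e2]; exact div_lt_div_of_pos_right (by linarith) hbk
  have s1 : ∀ t, HasDerivAt (fun t : ℝ => t / (a * k)) (1 / (a * k)) t := fun t =>
    (hasDerivAt_id t).div_const _
  have s2 : ∀ t, HasDerivAt (fun t : ℝ => (L - t) / (b * k)) (-1 / (b * k)) t := fun t =>
    ((hasDerivAt_id t).const_sub L).div_const _
  have hkp : 0 < k ^ (p - 1) := Real.rpow_pos_of_pos hk0 _
  refine ⟨lam, u, u', huc, hu'c, ?_, ?_, ?_, ?_, ?_⟩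
  · simp [hu, ht1pos.le, hS0]
  · simp [hu, ht1L, hS0]
  · refine ext_deriv (t1 := t1) huc hu'c ?_
    intro t ht hne
    rcases lt_or_gt_of_ne hne with h | h
    · have := (hS' _ (m1 t ht h)).2.2.comp t (s1 t)
      have hval : u' t = C (t / (a * k)) * (1 / (a * k)) := by
        simp only [hu', if_pos h.le]; ring
      rw [hval]
      refine this.congr_of_eventuallyEq ?_
      filter_upwards [Iio_mem_nhds h] with y hy
      simp only [hu, Function.comp, if_pos ((mem_Iio.1 hy).le)]
    · have := (hS' _ (m2 t ht h)).2.2.comp t (s2 t)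
      have hval : u' t = C ((L - t) / (b * k)) * (-1 / (b * k)) := by
        simp only [hu', if_neg (not_le.2 h)]; ring
      rw [hval]
      refine this.congr_of_eventuallyEq ?_
      filter_upwards [Ioi_mem_nhds h] with y hy
      simp only [hu, Function.comp, if_neg (not_le.2 (mem_Ioi.1 hy))]
  · intro t ht
    rcases lt_trichotomy t t1 with h | h | h
    · simp only [hu, if_pos h.le]
      exact (hS' _ (m1 t ht h)).1
    · simp [hu, h, e1, hST]
    · simp only [hu, if_neg (not_le.2 h)]
      exact (hS' _ (m2 t ht h)).1
  · refine ext_deriv (t1 := t1) (g := fun t => -(lam * u t ^ (p - 1)))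
      ((asymFlux_continuous hp a b).comp hu'c)
      (continuous_const.mul (huc.rpow_const fun _ => Or.inr (by linarith))).neg ?_
    intro t ht hne
    rcases lt_or_gt_of_ne hne with h | h
    · have := ((hD _ (m1 t ht h)).comp t (s1 t)).const_mul (a / k ^ (p - 1))
      have hval : -(lam * u t ^ (p - 1)) = a / k ^ (p - 1) *
          (-((p - 1) * S (t / (a * k)) ^ (p - 1)) * (1 / (a * k))) := by
        simp only [hu, if_pos h.le, hlam]; field_simp
      rw [hval]
      refine this.congr_of_eventuallyEq ?_
      filter_upwards [Ioo_mem_nhds ht.1 ht.2, Iio_mem_nhds h] with y hy hy1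
      simp only [hu', Function.comp, if_pos ((mem_Iio.1 hy1).le)]
      exact flux_scale hp b ha hk0 (hCpos _ (m1 y hy hy1))
    · have := ((hD _ (m2 t ht h)).comp t (s2 t)).const_mul (-(b / k ^ (p - 1)))
      have hval : -(lam * u t ^ (p - 1)) = -(b / k ^ (p - 1)) *
          (-((p - 1) * S ((L - t) / (b * k)) ^ (p - 1)) * (-1 / (b * k))) := by
        simp only [hu, if_neg (not_le.2 h), hlam]; field_simp
      rw [hval]
      refine this.congr_of_eventuallyEq ?_
      filter_upwards [Ioo_mem_nhds ht.1 ht.2, Ioi_mem_nhds h] with y hy hy1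
      simp only [hu', Function.comp, if_neg (not_le.2 (mem_Ioi.1 hy1))]
      rw [asymFlux_neg, flux_scale hp a hb hk0 (hCpos _ (m2 y hy hy1))]
      ring

lemma Eig.smul {p a b L lam : ℝ} {u u' : ℝ → ℝ} (hp : 1 < p) (h : Eig p a b L lam u u') {c : ℝ}
    (hc : 0 < c) : Eig p a b L lam (fun t => c * u t) (fun t => c * u' t) := by
  have hnn := h.nonneg
  obtain ⟨h1, h2, h3, h4, h5, h6, h7⟩ := h
  refine ⟨continuous_const.mul h1, continuous_const.mul h2, by simp [h3], by simp [h4],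
    fun t ht => (h5 t ht).const_mul c, fun t ht => mul_pos hc (h6 t ht), fun t ht => ?_⟩
  simp only [asymFlux_smul hp a b hc.le]
  have e : -(lam * (c * u t) ^ (p - 1)) = c ^ (p - 1) * -(lam * u t ^ (p - 1)) := by
    rw [Real.mul_rpow hc.le (hnn t ht)]; ring
  rw [e]
  exact (h7 t ht).const_mul (c ^ (p - 1))

lemma Eig.refl {p a b L lam : ℝ} {u u' : ℝ → ℝ} (h : Eig p a b L lam u u') :
    Eig p b a L lam (fun t => u (L - t)) (fun t => - u' (L - t)) := by
  obtain ⟨h1, h2, h3, h4, h5, h6, h7⟩ := h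
  have hm : MapsTo (fun t : ℝ => L - t) (Icc 0 L) (Icc 0 L) := fun t ht =>
    ⟨by linarith [ht.2], by linarith [ht.1]⟩
  have hd : ∀ t, HasDerivWithinAt (fun t : ℝ => L - t) (-1) (Icc 0 L) t := fun t =>
    ((hasDerivAt_id t).const_sub L).hasDerivWithinAt
  refine ⟨by fun_prop, by fun_prop, by simp [h4], by simp [h3], fun t ht => ?_,
    fun t ht => h6 _ ⟨by linarith [ht.2], by linarith [ht.1]⟩, fun t ht => ?_⟩
  · have := (h5 _ (hm ht)).comp t (hd t) hm
    rw [mul_neg_one] at this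
    exact this
  · simp only [asymFlux_neg]
    have := ((h7 _ (hm ht)).comp t (hd t) hm).neg
    rw [mul_neg_one, neg_neg] at this
    exact this

lemma picone_eps {p a b L lam : ℝ} {u u' v v' : ℝ → ℝ} (hp : 1 < p) (ha : 0 < a) (hb : 0 < b)
    (h : Eig p a b L lam u u') (hv : Adm L v v') {ε : ℝ} (hε : 0 < ε) :
    ∃ Φ φ : ℝ → ℝ, ContinuousOn Φ (Icc 0 L) ∧ Φ 0 = 0 ∧ Φ L = 0 ∧
      ∀ t ∈ Ioo 0 L, HasDerivAt Φ (φ t) t ∧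
        φ t ≤ (if 0 < v t then asymE p a b (v' t) else 0) -
          lam * ((max (v t) 0) ^ p * (u t / (u t + ε)) ^ (p - 1)) := by
  have hnn := h.nonneg
  obtain ⟨h1, h2, h3, h4, h5, h6, h7⟩ := h
  obtain ⟨⟨hv1, hv2⟩, hv0, hvL⟩ := hv
  have hv1c : ContinuousOn v (Icc 0 L) := fun t ht => (hv1 t ht).continuousWithinAt
  set J : ℝ → ℝ := fun t => asymFlux p a b (u' t) with hJ
  have hJc : Continuous J := (asymFlux_continuous hp a b).comp h2
  refine ⟨fun t => J t * (max (v t) 0) ^ p * (u t + ε) ^ (1 - p),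
    fun t => (-(lam * u t ^ (p - 1)) * (max (v t) 0) ^ p +
      J t * (p * (max (v t) 0) ^ (p - 1) * v' t)) * (u t + ε) ^ (1 - p) +
      J t * (max (v t) 0) ^ p * (u' t * (1 - p) * (u t + ε) ^ (1 - p - 1)), ?_, ?_, ?_, ?_⟩
  · refine (hJc.continuousOn.mul ?_).mul ?_
    · exact (hv1c.sup continuousOn_const).rpow_const fun _ _ => Or.inr (by linarith)
    · refine (h1.add continuous_const).continuousOn.rpow_const fun t ht => Or.inl ?_
      have := hnn t ht
      exact (add_pos_of_nonneg_of_pos this hε).ne'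
  · simp [hv0, (by linarith : p ≠ 0)]
  · simp [hvL, (by linarith : p ≠ 0)]
  · intro t ht
    have hN : Icc 0 L ∈ nhds t := Icc_mem_nhds ht.1 ht.2
    have htI : t ∈ Icc 0 L := ⟨ht.1.le, ht.2.le⟩
    have du := (h5 t htI).hasDerivAt hN
    have dJ : HasDerivAt J (-(lam * u t ^ (p - 1))) t := (h7 t htI).hasDerivAt hN
    have dv := (hv1 t htI).hasDerivAt hN
    have hu0 := h6 t ht
    have hw : 0 < u t + ε := by linarith
    have dV : HasDerivAt (fun t => (max (v t) 0) ^ p) (p * (max (v t) 0) ^ (p - 1) * v' t) t :=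
      (max_rpow_hasDerivAt hp (v t)).comp t dv
    have dw : HasDerivAt (fun t => (u t + ε) ^ (1 - p))
        (u' t * (1 - p) * (u t + ε) ^ (1 - p - 1)) t :=
      (du.add_const ε).rpow_const (Or.inl hw.ne')
    refine ⟨(dJ.mul dV).mul dw, ?_⟩
    set m := max (v t) 0 with hm
    have hm0 : 0 ≤ m := le_max_right _ _
    set w := u t + ε with hwd
    have hr0 : 0 ≤ m / w := by positivity
    have w1 : w ^ (1 - p) = (w ^ (p - 1))⁻¹ := by
      rw [← Real.rpow_neg hw.le]; congr 1; ring
    have w2 : w ^ (1 - p - 1) = (w ^ p)⁻¹ := by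
      rw [← Real.rpow_neg hw.le]; congr 1; ring
    have eA : (u t / w) ^ (p - 1) = u t ^ (p - 1) * w ^ (1 - p) := by
      rw [Real.div_rpow hu0.le hw.le, w1]; rfl
    have eB : (m / w) ^ (p - 1) = m ^ (p - 1) * w ^ (1 - p) := by
      rw [Real.div_rpow hm0 hw.le, w1]; rfl
    have eC : (m / w) ^ p = m ^ p * w ^ (1 - p - 1) := by
      rw [Real.div_rpow hm0 hw.le, w2]; rfl
    have tang := asymE_tangent hp ha hb (v' t) (m / w * u' t)
    rw [← asymFlux_mul_self hp a b (m / w * u' t), asymFlux_smul hp a b hr0] at tang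
    have eD := rpow_sub_one_mul hp hr0
    have tang2 : J t * (p * (m / w) ^ (p - 1) * v' t - (p - 1) * (m / w) ^ p * u' t) ≤
        asymE p a b (v' t) := by
      rw [← eD]
      refine le_trans (le_of_eq ?_) tang
      simp only [hJ]; ring
    have tot : (-(lam * u t ^ (p - 1)) * m ^ p + J t * (p * m ^ (p - 1) * v' t)) * w ^ (1 - p) +
        J t * m ^ p * (u' t * (1 - p) * w ^ (1 - p - 1)) =
        J t * (p * (m / w) ^ (p - 1) * v' t - (p - 1) * (m / w) ^ p * u' t) -
          lam * (m ^ p * (u t / w) ^ (p - 1)) := by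
      rw [eA, eB, eC]; ring
    simp only []
    rw [tot]
    refine sub_le_sub_right ?_ _
    split_ifs with hvt
    · exact tang2
    · have : m = 0 := max_eq_right (not_lt.1 hvt)
      rw [this, zero_div, Real.zero_rpow (by linarith), Real.zero_rpow (by linarith)]
      simp

lemma Adm.neg {L : ℝ} {v v' : ℝ → ℝ} (hv : Adm L v v') :
    Adm L (fun t => - v t) (fun t => - v' t) :=
  ⟨⟨fun t ht => (hv.1.1 t ht).neg, hv.1.2.neg⟩, by simp [hv.2.1], by simp [hv.2.2]⟩

lemma Adm.cont {L : ℝ} {v v' : ℝ → ℝ} (hv : Adm L v v') : ContinuousOn v (Icc 0 L) :=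
  fun t ht => (hv.1.1 t ht).continuousWithinAt

lemma abs_rpow_split {p : ℝ} (hp : 1 < p) (s : ℝ) :
    |s| ^ p = (max s 0) ^ p + (max (-s) 0) ^ p := by
  rcases le_total 0 s with h | h
  · rw [abs_of_nonneg h, max_eq_left h, max_eq_right (by linarith), Real.zero_rpow (by linarith),
      add_zero]
  · rw [abs_of_nonpos h, max_eq_right h, max_eq_left (by linarith), Real.zero_rpow (by linarith),
      zero_add]

/-- the weights entering the regularised Picone inequality -/
lemma weight_bound {p ε x : ℝ} (hp : 1 < p) (hε : 0 < ε) (hx : 0 ≤ x) :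
    0 ≤ (x / (x + ε)) ^ (p - 1) ∧ (x / (x + ε)) ^ (p - 1) ≤ 1 := by
  have h : 0 ≤ x / (x + ε) := by positivity
  refine ⟨Real.rpow_nonneg h _, Real.rpow_le_one h ?_ (by linarith)⟩
  rw [div_le_one (by linarith)]; linarith

lemma weight_tendsto {p x : ℝ} (hx : 0 < x) :
    Filter.Tendsto (fun ε => (x / (x + ε)) ^ (p - 1)) (nhdsWithin 0 (Ioi 0)) (nhds 1) := by
  have : ContinuousAt (fun ε => (x / (x + ε)) ^ (p - 1)) 0 := by
    refine ContinuousAt.rpow_const (ContinuousAt.div (by fun_prop) (by fun_prop) (by simpa using hx.ne')) ?_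
    left; simp [hx.ne']
  have h2 := this.tendsto
  simp only [add_zero, div_self hx.ne', Real.one_rpow] at h2
  exact h2.mono_left nhdsWithin_le_nhds

lemma picone {p a b L lam : ℝ} {u u' v v' : ℝ → ℝ} (hp : 1 < p) (ha : 0 < a) (hb : 0 < b)
    (hL : 0 < L) (h : Eig p a b L lam u u') (hv : Adm L v v') :
    lam * (∫ t in (0:ℝ)..L, |v t| ^ p) ≤ ∫ t in (0:ℝ)..L, asymE p a b (v' t) := by
  have hr := h.refl
  have hvc := hv.cont
  have hnn := h.nonneg
  have hnr := hr.nonneg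
  have hpos := h.2.2.2.2.2.1
  have hposr := hr.2.2.2.2.2.1
  set ur : ℝ → ℝ := fun t => u (L - t) with hur
  have huI : uIcc 0 L = Icc 0 L := uIcc_of_le hL.le
  have cE : ContinuousOn (fun t => asymE p a b (v' t)) (Icc 0 L) :=
    (asymE_continuous hp a b).comp_continuousOn hv.1.2
  have cP : ContinuousOn (fun t => (max (v t) 0) ^ p) (Icc 0 L) :=
    (hvc.sup continuousOn_const).rpow_const fun _ _ => Or.inr (by linarith)
  have cM : ContinuousOn (fun t => (max (-v t) 0) ^ p) (Icc 0 L) :=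
    (hvc.neg.sup continuousOn_const).rpow_const fun _ _ => Or.inr (by linarith)
  have cA : ContinuousOn (fun t => |v t| ^ p) (Icc 0 L) :=
    hvc.abs.rpow_const fun _ _ => Or.inr (by linarith)
  let G : ℝ → ℝ → ℝ := fun ε t => (max (v t) 0) ^ p * (u t / (u t + ε)) ^ (p - 1) +
    (max (-v t) 0) ^ p * (ur t / (ur t + ε)) ^ (p - 1)
  have cW : ∀ (f : ℝ → ℝ), Continuous f → (∀ t ∈ Icc 0 L, 0 ≤ f t) → ∀ ε > 0,
      ContinuousOn (fun t => (f t / (f t + ε)) ^ (p - 1)) (Icc 0 L) := by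
    intro f hf hf0 ε hε
    refine ContinuousOn.rpow_const ?_ fun _ _ => Or.inr (by linarith)
    refine hf.continuousOn.div (hf.add continuous_const).continuousOn fun t ht => ?_
    have := hf0 t ht
    linarith
  have cG : ∀ ε > 0, ContinuousOn (G ε) (Icc 0 L) := fun ε hε =>
    (cP.mul (cW u h.1 hnn ε hε)).add (cM.mul (cW ur hr.1 hnr ε hε))
  have ineq : ∀ ε > 0, lam * (∫ t in (0:ℝ)..L, G ε t) ≤ ∫ t in (0:ℝ)..L, asymE p a b (v' t) := by
    intro ε hε
    obtain ⟨Φ, φ, c1, z1, y1, d1⟩ := picone_eps hp ha hb h hv hε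
    obtain ⟨Ψ, ψ, c2, z2, y2, d2⟩ := picone_eps hp hb ha hr hv.neg hε
    have cT : ContinuousOn (fun t => asymE p a b (v' t) - lam * G ε t) (Icc 0 L) :=
      cE.sub (continuousOn_const.mul (cG ε hε))
    have := intervalIntegral.sub_le_integral_of_hasDeriv_right_of_le hL.le (c1.add c2)
      (g' := fun t => φ t + ψ t) (φ := fun t => asymE p a b (v' t) - lam * G ε t)
      (fun t ht => ((d1 t ht).1.add (d2 t ht).1).hasDerivWithinAt)
      cT.integrableOn_Icc (fun t ht => by
        have i1 := (d1 t ht).2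
        have i2 := (d2 t ht).2
        rw [asymE_neg] at i2
        have i3 : (if 0 < v t then asymE p a b (v' t) else 0) +
            (if 0 < -v t then asymE p a b (v' t) else 0) ≤ asymE p a b (v' t) := by
          have := asymE_nonneg (p := p) ha hb (v' t)
          split_ifs <;> linarith
        simp only [G]
        linarith)
    simp only [Pi.add_apply] at this
    have cLG : ContinuousOn (fun t => lam * G ε t) (Icc 0 L) :=
      continuousOn_const.mul (cG ε hε)
    rw [z1, z2, y1, y2, intervalIntegral.integral_sub (cE.intervalIntegrable_of_Icc hL.le)
      (cLG.intervalIntegrable_of_Icc hL.le),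
      intervalIntegral.integral_const_mul] at this
    linarith
  have lim : Filter.Tendsto (fun ε => ∫ t in (0:ℝ)..L, G ε t) (nhdsWithin 0 (Ioi 0))
      (nhds (∫ t in (0:ℝ)..L, |v t| ^ p)) := by
    have huo : Set.uIoc 0 L = Ioc 0 L := uIoc_of_le hL.le
    refine intervalIntegral.tendsto_integral_filter_of_dominated_convergence
      (fun t => |v t| ^ p) ?_ ?_ (cA.intervalIntegrable_of_Icc hL.le) ?_
    · filter_upwards [self_mem_nhdsWithin] with ε hε
      rw [huo]
      exact ((cG ε hε).mono Ioc_subset_Icc_self).aestronglyMeasurable measurableSet_Ioc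
    · filter_upwards [self_mem_nhdsWithin] with ε hε
      refine Filter.Eventually.of_forall fun t ht => ?_
      rw [huo] at ht
      have htI : t ∈ Icc 0 L := Ioc_subset_Icc_self ht
      obtain ⟨b1, b2⟩ := weight_bound hp hε (hnn t htI)
      obtain ⟨b3, b4⟩ := weight_bound hp hε (hnr t htI)
      have m1 : 0 ≤ (max (v t) 0) ^ p := Real.rpow_nonneg (le_max_right _ _) _
      have m2 : 0 ≤ (max (-v t) 0) ^ p := Real.rpow_nonneg (le_max_right _ _) _
      rw [abs_rpow_split hp, Real.norm_of_nonneg (add_nonneg (mul_nonneg m1 b1) (mul_nonneg m2 b3))]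
      exact add_le_add (mul_le_of_le_one_right m1 b2) (mul_le_of_le_one_right m2 b4)
    · have hne : ∀ᵐ t ∂(MeasureTheory.volume : MeasureTheory.Measure ℝ), t ≠ L :=
        MeasureTheory.Measure.ae_ne _ L
      filter_upwards [hne] with t htL ht
      rw [huo] at ht
      have htI : t ∈ Ioo 0 L := ⟨ht.1, lt_of_le_of_ne ht.2 htL⟩
      have := ((weight_tendsto (p := p) (hpos t htI)).const_mul ((max (v t) 0) ^ p)).add
        ((weight_tendsto (p := p) (hposr t htI)).const_mul ((max (-v t) 0) ^ p))
      rw [mul_one, mul_one, ← abs_rpow_split hp] at this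
      exact this
  refine le_of_tendsto (lim.const_mul lam) ?_
  filter_upwards [self_mem_nhdsWithin] with ε hε
  exact ineq ε hε

lemma Eig.adm {p a b L lam : ℝ} {u u' : ℝ → ℝ} (h : Eig p a b L lam u u') : Adm L u u' :=
  ⟨⟨h.2.2.2.2.1, h.2.1.continuousOn⟩, h.2.2.1, h.2.2.2.1⟩

lemma Eig.weak {p a b L lam : ℝ} {u u' : ℝ → ℝ} (hp : 1 < p) (hL : 0 < L)
    (h : Eig p a b L lam u u') {φ φ' : ℝ → ℝ} (hφ : Adm L φ φ') :
    (∫ t in (0:ℝ)..L, asymFlux p a b (u' t) * φ' t) =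
      ∫ t in (0:ℝ)..L, lam * u t ^ (p - 1) * φ t := by
  obtain ⟨h1, h2, h3, h4, h5, h6, h7⟩ := h
  obtain ⟨⟨hv1, hv2⟩, hv0, hvL⟩ := hφ
  have huI : uIcc 0 L = Icc 0 L := uIcc_of_le hL.le
  have cJ : Continuous (fun t => -(lam * u t ^ (p - 1))) :=
    (continuous_const.mul (h1.rpow_const fun _ => Or.inr (by linarith))).neg
  rw [intervalIntegral.integral_mul_deriv_eq_deriv_mul_of_hasDerivWithinAt
    (u := fun t => asymFlux p a b (u' t)) (v := φ) (by rw [huI]; exact h7) (by rw [huI]; exact hv1)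
    (cJ.intervalIntegrable _ _) (hv2.intervalIntegrable_of_Icc hL.le), hv0, hvL,
    ← sub_eq_zero]
  simp

theorem stmt1 (p a b L : ℝ) (hp : 1 < p) (ha : 0 < a) (hb : 0 < b) (hL : 0 < L) :
    ∃ u u' : ℝ → ℝ, Adm L u u' ∧
      (∫ t in (0:ℝ)..L, |u t| ^ p) = 1 ∧
      (∫ t in (0:ℝ)..L, asymE p a b (u' t)) = lam1 p a b L ∧
      IsWeakSol p a b L u u' (fun t => lam1 p a b L * |u t| ^ (p - 2) * u t) := by

  have hp0 : 0 < p := by linarith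
  obtain ⟨lam, w, w', hw⟩ := exists_eig hp ha hb hL
  have hwn := hw.nonneg
  have cA : Continuous (fun t => |w t| ^ p) := hw.1.abs.rpow_const fun _ => Or.inr hp0.le
  have hI : 0 < ∫ t in (0:ℝ)..L, |w t| ^ p :=
    intervalIntegral.intervalIntegral_pos_of_pos_on (cA.intervalIntegrable _ _)
      (fun t ht => Real.rpow_pos_of_pos (abs_pos.2 (hw.2.2.2.2.2.1 t ht).ne') _) hL
  set I := ∫ t in (0:ℝ)..L, |w t| ^ p with hId
  set c := I ^ (-(1 / p)) with hc
  have hc0 : 0 < c := Real.rpow_pos_of_pos hI _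
  have hcp : c ^ p * I = 1 := by
    rw [hc, ← Real.rpow_mul hI.le, show -(1 / p) * p = -1 by field_simp, Real.rpow_neg_one]
    exact inv_mul_cancel₀ hI.ne'
  have hu := hw.smul hp hc0
  set u : ℝ → ℝ := fun t => c * w t with hud
  set u' : ℝ → ℝ := fun t => c * w' t with hud'
  have hnorm : (∫ t in (0:ℝ)..L, |u t| ^ p) = 1 := by
    have : ∀ t, |u t| ^ p = c ^ p * |w t| ^ p := by
      intro t
      rw [hud, abs_mul, abs_of_pos hc0, Real.mul_rpow hc0.le (abs_nonneg _)]
    simp only [this]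
    rw [intervalIntegral.integral_const_mul, ← hId, hcp]
  have huI : uIcc 0 L = Icc 0 L := uIcc_of_le hL.le
  have hun := hu.nonneg
  have hen : (∫ t in (0:ℝ)..L, asymE p a b (u' t)) = lam := by
    have h1 := hu.weak hp hL hu.adm
    simp only [asymFlux_mul_self hp] at h1
    rw [h1]
    have h2 : (∫ t in (0:ℝ)..L, lam * u t ^ (p - 1) * u t) =
        ∫ t in (0:ℝ)..L, lam * |u t| ^ p := by
      refine intervalIntegral.integral_congr fun t ht => ?_
      rw [huI] at ht
      beta_reduce
      rw [abs_of_nonneg (hun t ht), mul_assoc, rpow_sub_one_mul hp (hun t ht)]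
    rw [h2, intervalIntegral.integral_const_mul, hnorm, mul_one]
  have hlam : lam1 p a b L = lam := by
    refine IsLeast.csInf_eq ⟨⟨u, u', hu.adm, hnorm, hen.symm⟩, ?_⟩
    rintro E ⟨v, v', hv, hv1, rfl⟩
    have := picone hp ha hb hL hw hv
    rwa [hv1, mul_one] at this
  refine ⟨u, u', hu.adm, hnorm, by rw [hen, hlam], hu.adm, fun φ φ' hφ => ?_⟩
  rw [hu.weak hp hL hφ, hlam]
  refine intervalIntegral.integral_congr fun t ht => ?_
  rw [huI] at ht
  beta_reduce
  have h0 := hun t ht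
  rcases h0.eq_or_lt with h | h
  · rw [← h, Real.zero_rpow (by linarith)]; simp
  · rw [abs_of_pos h, show p - 2 = p - 1 - 1 by ring, Real.rpow_sub_one h.ne' (p - 1)]
    field_simp
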